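/- Let n ≥ 1, h > 0, α = √((n+1)/n), β = 1/(n+1), γ = (1/n)(1 ± √β), V = α(I − γ·e·eᵀ), and V₊ = [V, −V·e] with columns v₁, …, v_{n+1}. Let x₀ ∈ ℝⁿ and x_j = x₀ + h·v_j for j = 1, …, n+1. Suppose f : ℝⁿ → ℝ is continuously differentiable on an open set Ω containing the closed ball of radius h centered at x₀, and ∇f is Lipschitz continuous on Ω with constant L > 0. Let g = (1/(hα²))·V₊·δf₊ where δf₊ = (f(x₁) − f(x₀), …, f(x_{n+1}) − f(x₀))ᵀ. Then for every vertex x_j, j = 1, …, n+1, one has ‖∇f(x_j) − g‖₂ ≤ (1 + (1/2)√n)·L·h. -/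

import Mathlib

open Matrix

lemma aux_taylor {E : Type*} [NormedAddCommGroup E] [InnerProductSpace ℝ E] [CompleteSpace E]
    (f : E → ℝ) (x₀ d : E) (h L : ℝ) (hd : ‖d‖ = h) (Ω : Set E) (hΩopen : IsOpen Ω)
    (hball : Metric.closedBall x₀ h ⊆ Ω) (hf : ContDiffOn ℝ 1 f Ω)
    (hLip : ∀ y ∈ Ω, ∀ z ∈ Ω, ‖gradient f y - gradient f z‖ ≤ L * ‖y - z‖) :
    |f (x₀ + d) - f x₀ - inner ℝ (gradient f x₀) d| ≤ L * h ^ 2 / 2 := by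
  have h0 : 0 ≤ h := hd ▸ norm_nonneg d
  have hmem : ∀ t ∈ Set.Icc (0:ℝ) 1, x₀ + t • d ∈ Ω := by
    intro t ht
    apply hball
    rw [Metric.mem_closedBall, dist_eq_norm, add_sub_cancel_left, norm_smul, hd,
      Real.norm_of_nonneg ht.1]
    nlinarith [ht.2]
  have hx0 : x₀ ∈ Ω := by simpa using hmem 0 (by simp)
  have hder : ∀ t ∈ Set.Icc (0:ℝ) 1,
      HasDerivAt (fun t : ℝ => f (x₀ + t • d) - f x₀ - t * inner ℝ (gradient f x₀) d)
        (inner ℝ (gradient f (x₀ + t • d) - gradient f x₀) d) t := by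
    intro t ht
    have h1 : DifferentiableAt ℝ f (x₀ + t • d) :=
      (hf.differentiableOn (by norm_num)).differentiableAt (hΩopen.mem_nhds (hmem t ht))
    have h2 := h1.hasGradientAt.hasFDerivAt
    have h3 : HasDerivAt (fun t : ℝ => x₀ + t • d) d t := by
      simpa using ((hasDerivAt_id t).smul_const d).const_add x₀
    have h4 := h2.comp_hasDerivAt t h3
    have h5 := (h4.sub_const (f x₀)).sub
      ((hasDerivAt_id t).mul_const (inner ℝ (gradient f x₀) d))
    rw [inner_sub_left]
    refine HasDerivAt.congr_deriv h5 ?_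
    simp
  have key := image_norm_le_of_norm_deriv_right_le_deriv_boundary
    (f := fun t : ℝ => f (x₀ + t • d) - f x₀ - t * inner ℝ (gradient f x₀) d)
    (f' := fun t : ℝ => inner ℝ (gradient f (x₀ + t • d) - gradient f x₀) d)
    (a := 0) (b := 1)
    (B := fun t => L * h ^ 2 / 2 * t ^ 2) (B' := fun t => L * h ^ 2 * t)
    (fun t ht => (hder t ht).continuousAt.continuousWithinAt)
    (fun t ht => (hder t (Set.Ico_subset_Icc_self ht)).hasDerivWithinAt)
    (by simp)
    (fun t => by
      have := (hasDerivAt_pow 2 t).const_mul (L * h ^ 2 / 2)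
      refine this.congr_deriv ?_
      norm_num
      ring)
    (fun t ht => by
      refine (norm_inner_le_norm _ _).trans ?_
      have := hLip _ (hmem t (Set.Ico_subset_Icc_self ht)) _ hx0
      rw [add_sub_cancel_left, norm_smul, hd, Real.norm_of_nonneg ht.1] at this
      rw [hd]
      nlinarith)
  have := key (x := 1) (by simp)
  simpa using this

lemma aux_frame {E : Type*} [NormedAddCommGroup E] [InnerProductSpace ℝ E]
    {ι : Type*} [Fintype ι] (v : ι → E) (A : ℝ) (hA : 0 < A)
    (hframe : ∀ u : E, ∑ j, (inner ℝ (v j) u : ℝ) • v j = A • u)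
    (r : ι → ℝ) (R : ℝ) (hr : ∀ j, |r j| ≤ R) :
    A * ‖A⁻¹ • ∑ j, r j • v j‖ ^ 2 ≤ Fintype.card ι * R ^ 2 := by
  set w := A⁻¹ • ∑ j, r j • v j with hw
  have h1 : ∑ j, (inner ℝ (v j) w : ℝ) ^ 2 = A * ‖w‖ ^ 2 := by
    have := congrArg (fun z => (inner ℝ z w : ℝ)) (hframe w)
    simp only [sum_inner, inner_smul_left, real_inner_self_eq_norm_sq] at this
    simpa [sq] using this
  have h2 : ∑ j, r j * (inner ℝ (v j) w : ℝ) = A * ‖w‖ ^ 2 := by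
    have h3 : A • w = ∑ j, r j • v j := by rw [hw, smul_inv_smul₀ hA.ne']
    have := congrArg (fun z => (inner ℝ z w : ℝ)) h3
    simp only [sum_inner, inner_smul_left, real_inner_self_eq_norm_sq] at this
    simpa using this.symm
  have h3 : ∑ j, (r j) ^ 2 ≤ Fintype.card ι * R ^ 2 := by
    calc ∑ j, (r j) ^ 2 ≤ ∑ _j : ι, R ^ 2 := Finset.sum_le_sum fun j _ => by
          rw [← sq_abs]; gcongr; exact hr j
      _ = _ := by simp
  have h4 : 0 ≤ ∑ j, (r j - (inner ℝ (v j) w : ℝ)) ^ 2 := Finset.sum_nonneg fun _ _ => sq_nonneg _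
  have h5 : ∑ j, (r j - (inner ℝ (v j) w : ℝ)) ^ 2 =
      ∑ j, (r j) ^ 2 - 2 * ∑ j, r j * (inner ℝ (v j) w : ℝ) + ∑ j, (inner ℝ (v j) w : ℝ) ^ 2 := by
    rw [Finset.mul_sum, ← Finset.sum_sub_distrib, ← Finset.sum_add_distrib]
    exact Finset.sum_congr rfl fun _ _ => by ring
  linarith

/-- Error bound at the vertices: for the aligned regular simplex
of radius `h` and centroid `x₀`, if `f` is `C¹` on an open set `Ω ⊇ B̄(x₀, h)`
with `L`-Lipschitz gradient on `Ω`, then the aligned regular simplex gradient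
`g = (1/(hα²)) V₊ δf₊` satisfies `‖∇f(x_j) − g‖₂ ≤ (1 + √n/2) L h` at every vertex `x_j`. -/
theorem stmt_13 (n : ℕ) (hn : 1 ≤ n)
    (α β γ h L : ℝ) (hh : 0 < h) (hL : 0 < L)
    (hα : α = Real.sqrt ((n + 1) / n))
    (hβ : β = 1 / (n + 1))
    (hγ : γ = (1 / n) * (1 - Real.sqrt β) ∨ γ = (1 / n) * (1 + Real.sqrt β))
    (e : Fin n → ℝ) (he : e = fun _ => 1)
    (V : Matrix (Fin n) (Fin n) ℝ)
    (hV : V = α • ((1 : Matrix (Fin n) (Fin n) ℝ) - γ • Matrix.vecMulVec e e))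
    (Vp : Matrix (Fin n) (Fin (n + 1)) ℝ)
    (hVp : ∀ (i : Fin n) (j : Fin (n + 1)),
      Vp i j = if hj : (j : ℕ) < n then V i ⟨j, hj⟩ else -(V.mulVec e i))
    (x₀ : EuclideanSpace ℝ (Fin n))
    (x : Fin (n + 1) → EuclideanSpace ℝ (Fin n))
    (hx : ∀ (j : Fin (n + 1)) (i : Fin n), x j i = x₀ i + h * Vp i j)
    (f : EuclideanSpace ℝ (Fin n) → ℝ)
    (Ω : Set (EuclideanSpace ℝ (Fin n)))
    (hΩopen : IsOpen Ω)
    (hball : Metric.closedBall x₀ h ⊆ Ω)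
    (hf : ContDiffOn ℝ 1 f Ω)
    (hLip : ∀ y ∈ Ω, ∀ z ∈ Ω, ‖gradient f y - gradient f z‖ ≤ L * ‖y - z‖)
    (δ : Fin (n + 1) → ℝ)
    (hδ : ∀ j, δ j = f (x j) - f x₀)
    (g : EuclideanSpace ℝ (Fin n))
    (hg : ∀ i, g i = (1 / (h * α ^ 2)) * Vp.mulVec δ i) :
    ∀ j : Fin (n + 1), ‖gradient f (x j) - g‖ ≤ (1 + (1 / 2) * Real.sqrt n) * L * h := by
  have hn0 : (0:ℝ) < n := by exact_mod_cast hn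
  have hA : α ^ 2 = (n + 1) / n := by rw [hα]; exact Real.sq_sqrt (by positivity)
  have hApos : 0 < α ^ 2 := by rw [hA]; positivity
  have hβ0 : 0 ≤ β := by rw [hβ]; positivity
  have hs : Real.sqrt β ^ 2 = β := Real.sq_sqrt hβ0
  have hg1 : (1 - n * γ) ^ 2 = β := by
    rcases hγ with hγ | hγ
    · have : 1 - n * γ = Real.sqrt β := by rw [hγ]; field_simp; ring
      rw [this, hs]
    · have : 1 - n * γ = -Real.sqrt β := by rw [hγ]; field_simp; ring
      rw [this, neg_sq, hs]
  have hg2 : n * γ ^ 2 - 2 * γ = -β := by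
    have h1 : n * (n * γ ^ 2 - 2 * γ) = β - 1 := by rw [← hg1]; ring
    have h2 : (n:ℝ) * (-β) = β - 1 := by rw [hβ]; field_simp; ring
    exact mul_left_cancel₀ hn0.ne' (h1.trans h2.symm)
  have hVe : ∀ i j, V i j = α * ((if i = j then 1 else 0) - γ) := by
    intro i j
    rw [hV, he]
    simp [Matrix.vecMulVec_apply, Matrix.one_apply]
  have hVs : ∀ i, V.mulVec e i = α * (1 - n * γ) := by
    intro i
    simp [Matrix.mulVec, dotProduct, hVe, he, ← Finset.mul_sum, Finset.sum_sub_distrib]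
  have hVc : ∀ i (j : Fin n), Vp i j.castSucc = α * ((if i = j then 1 else 0) - γ) := by
    intro i j
    rw [hVp]
    simp [hVe]
  have hVl : ∀ i, Vp i (Fin.last n) = -(α * (1 - n * γ)) := by
    intro i
    rw [hVp]
    simp [hVs]
  have hVV : ∀ i k, ∑ j, Vp i j * Vp k j = α ^ 2 * (if i = k then 1 else 0) := by
    intro i k
    rw [Fin.sum_univ_castSucc]
    simp only [hVc, hVl]
    have : ∀ j : Fin n, α * ((if i = j then 1 else 0) - γ) * (α * ((if k = j then 1 else 0) - γ))
        = α ^ 2 * ((if i = j then (if k = j then 1 else 0) else 0)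
          - γ * (if i = j then 1 else 0) - γ * (if k = j then 1 else 0) + γ ^ 2) := by
      intro j
      split_ifs <;> ring
    simp only [this, ← Finset.mul_sum, Finset.sum_add_distrib, Finset.sum_sub_distrib]
    simp only [Finset.sum_ite_eq, Finset.mem_univ, if_true, Finset.sum_const, Finset.card_univ,
      Fintype.card_fin, nsmul_eq_mul, eq_comm (a := k) (b := i)]
    linear_combination α ^ 2 * hg2 + α ^ 2 * hg1
  have hunit : ∀ j, ∑ i, Vp i j ^ 2 = 1 := by
    intro j
    refine Fin.lastCases ?_ (fun j => ?_) j
    · simp only [hVl, Finset.sum_const, Finset.card_univ, Fintype.card_fin, nsmul_eq_mul]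
      rw [neg_sq, mul_pow, hg1, hA, hβ]
      field_simp
    · simp only [hVc]
      have : ∀ i : Fin n, (α * ((if i = j then 1 else 0) - γ)) ^ 2
          = α ^ 2 * ((1 - 2 * γ) * (if i = j then 1 else 0) + γ ^ 2) := by
        intro i
        split_ifs <;> ring
      simp only [this, ← Finset.mul_sum, Finset.sum_add_distrib]
      simp only [Finset.sum_ite_eq', Finset.mem_univ, if_true, Finset.sum_const, Finset.card_univ,
        Fintype.card_fin, nsmul_eq_mul]
      have h1 : α ^ 2 * (1 - β) = 1 := by rw [hA, hβ]; field_simp; ring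
      linear_combination h1 + α ^ 2 * hg2
  let v : Fin (n + 1) → EuclideanSpace ℝ (Fin n) := fun j => WithLp.toLp 2 fun i => Vp i j
  have hv : ∀ j i, v j i = Vp i j := fun _ _ => rfl
  have hvn : ∀ j, ‖v j‖ = 1 := by
    intro j
    rw [EuclideanSpace.norm_eq]
    simp [hv, hunit]
  have hxv : ∀ j, x j = x₀ + h • v j := by
    intro j
    ext i
    simp [hx, hv]
  have hframe : ∀ u, ∑ j, (inner ℝ (v j) u : ℝ) • v j = α ^ 2 • u := by
    intro u
    ext i
    simp only [WithLp.ofLp_sum, WithLp.ofLp_smul, Finset.sum_apply, Pi.smul_apply, smul_eq_mul,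
      PiLp.inner_apply, hv]
    simp only [Finset.sum_mul]
    rw [Finset.sum_comm]
    have : ∀ k, ∑ j, (inner ℝ (Vp k j) (u k) : ℝ) * Vp i j
        = u k * (α ^ 2 * (if i = k then 1 else 0)) := by
      intro k
      rw [← hVV, Finset.mul_sum]
      exact Finset.sum_congr rfl fun j _ => by simp; ring
    simp only [this]
    simp [mul_comm]
  set G := gradient f x₀ with hG
  have hnorm : ∀ j, ‖h • v j‖ = h := by
    intro j
    rw [norm_smul, hvn, mul_one, Real.norm_of_nonneg hh.le]
  let r : Fin (n + 1) → ℝ := fun j => h⁻¹ * (δ j - inner ℝ G (h • v j))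
  have hr : ∀ j, |r j| ≤ L * h / 2 := by
    intro j
    have := aux_taylor f x₀ (h • v j) h L (hnorm j) Ω hΩopen hball hf hLip
    rw [← hxv, ← hδ] at this
    rw [abs_mul, abs_of_pos (inv_pos.2 hh), inv_mul_le_iff₀ hh]
    refine this.trans (le_of_eq (by ring))
  have hgv : g - G = (α ^ 2)⁻¹ • ∑ j, r j • v j := by
    have h1 : g = (α ^ 2)⁻¹ • ∑ j, (h⁻¹ * δ j) • v j := by
      ext i
      rw [hg]
      simp only [WithLp.ofLp_sum, WithLp.ofLp_smul, Finset.sum_apply, Pi.smul_apply, smul_eq_mul,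
        hv, Matrix.mulVec, dotProduct, Finset.mul_sum]
      exact Finset.sum_congr rfl fun j _ => by field_simp
    have h2 : G = (α ^ 2)⁻¹ • ∑ j, (inner ℝ (v j) G : ℝ) • v j := by
      rw [hframe, inv_smul_smul₀ hApos.ne']
    rw [h1]
    nth_rewrite 1 [h2]
    rw [← smul_sub, ← Finset.sum_sub_distrib]
    congr 1
    refine Finset.sum_congr rfl fun j _ => ?_
    rw [← sub_smul]
    congr 1
    simp only [r, inner_smul_right, real_inner_comm]
    field_simp
  have hfin := aux_frame v (α ^ 2) hApos hframe r (L * h / 2) hr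
  rw [← hgv, hA, Fintype.card_fin] at hfin
  have hE : ‖g - G‖ ≤ 1 / 2 * Real.sqrt n * L * h := by
    refine (sq_le_sq₀ (norm_nonneg _) (by positivity)).1 ?_
    have h1 : (1 / 2 * Real.sqrt n * L * h) ^ 2 = n * (L * h / 2) ^ 2 := by
      have := Real.sq_sqrt hn0.le
      linear_combination (L * h / 2) ^ 2 * this
    rw [h1]
    push_cast at hfin
    rw [div_mul_eq_mul_div, div_le_iff₀ hn0] at hfin
    have : (0:ℝ) < n + 1 := by positivity
    refine le_of_mul_le_mul_left (hfin.trans (le_of_eq (by ring))) this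
  intro j
  have hxj : ‖gradient f (x j) - G‖ ≤ L * h := by
    have h1 : x j ∈ Metric.closedBall x₀ h := by
      rw [hxv, Metric.mem_closedBall, dist_eq_norm, add_sub_cancel_left, hnorm]
    have := hLip _ (hball h1) x₀ (hball (Metric.mem_closedBall_self hh.le))
    rwa [hxv, add_sub_cancel_left, hnorm, ← hxv] at this
  calc ‖gradient f (x j) - g‖ = ‖(gradient f (x j) - G) - (g - G)‖ := by congr 1; abel
    _ ≤ _ := norm_sub_le _ _
    _ ≤ L * h + 1 / 2 * Real.sqrt n * L * h := add_le_add hxj hE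
    _ = _ := by ring
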